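/- arXiv:2404.05554 — 2 statements merged into one kernel-verified Lean document; each statement's English description precedes it below -/
import Mathlib

section
/- Suppose Assumption VOU holds and let X^stat be the stationary Volterra Ornstein–Uhlenbeck process. Then for all n, N ∈ ℕ, 0 ≤ t₁ < … < t_n and 0 ≤ s₁ < … < s_N, the random vector (X^stat_{t₁},…,X^stat_{t_n}, X^stat_{s₁+h},…,X^stat_{s_N+h}) converges weakly, as h → ∞, to (X^stat_{t₁},…,X^stat_{t_n}, X̄_{s₁},…,X̄_{s_N}), where X̄ is an independent copy of X^stat. -/
open MeasureTheory Set Filter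
open scoped ENNReal NNReal Topology

noncomputable section

/-- A scalar kernel is completely monotone: `C^∞` on `(0,∞)` with
`(-1)^n K^{(n)}(t) ≥ 0` for all `n` and `t > 0`. -/
def CompletelyMonotoneFn (K : ℝ → ℝ) : Prop :=
  ContDiffOn ℝ (⊤ : ℕ∞) K (Set.Ioi 0) ∧
  ∀ (n : ℕ) (t : ℝ), 0 < t → 0 ≤ (-1 : ℝ) ^ n * iteratedDerivWithin n K (Set.Ioi 0) t

/-- Assumption (VOU) on the kernel: `0 ≤ K ∈ L²_loc(ℝ₊)` completely monotone, and
there is `γ ∈ (0,1]` with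
`sup_{0 ≤ t-s ≤ 1} (t-s)^{-2γ}(∫_s^t K(r)² dr + ∫₀^∞ (K((t-s)+r)-K(r))² dr) < ∞`. -/
def AssumptionVOUKernel (K : ℝ → ℝ) (γ : ℝ) : Prop :=
  (∀ t > (0:ℝ), 0 ≤ K t) ∧ CompletelyMonotoneFn K ∧
  (∀ T > (0:ℝ), IntervalIntegrable (fun t => (K t) ^ 2) volume 0 T) ∧
  γ ∈ Set.Ioc (0:ℝ) 1 ∧
  ∃ Cγ : ℝ, ∀ s t : ℝ, 0 ≤ s → s ≤ t → t - s ≤ 1 →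
    IntegrableOn (fun r => (K ((t - s) + r) - K r) ^ 2) (Set.Ioi 0) ∧
    (∫ r in s..t, (K r) ^ 2) + (∫ r in Set.Ioi (0:ℝ), (K ((t - s) + r) - K r) ^ 2) ≤
      Cγ * (t - s) ^ (2 * γ)

/-- `E_β ∈ L²_loc(ℝ₊)` solves the linear Volterra equation
`E_β(t) = K(t) + ∫₀ᵗ K(t-s) β E_β(s) ds`. -/
def SolvesResolventEq (K : ℝ → ℝ) (β : ℝ) (E : ℝ → ℝ) : Prop :=
  (∀ T > (0:ℝ), IntervalIntegrable (fun t => (E t) ^ 2) volume 0 T) ∧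
  ∀ t > (0:ℝ), E t = K t + ∫ s in (0:ℝ)..t, K (t - s) * (β * E s)

/-- `‖K‖_{L¹(ℝ₊)} = ∫₀^∞ K(t) dt ∈ [0,∞]`. -/
noncomputable def normL1 (K : ℝ → ℝ) : ℝ≥0∞ :=
  ∫⁻ t in Set.Ioi (0:ℝ), ENNReal.ofReal (K t)

/-- The mean `𝔼[X_t] = (1 + β∫₀ᵗ E_β)x₀ + (∫₀ᵗ E_β) b` of the VOU process. -/
noncomputable def meanVOU (E : ℝ → ℝ → ℝ) (x₀ b β t : ℝ) : ℝ :=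
  (1 + β * ∫ s in (0:ℝ)..t, E β s) * x₀ + (∫ s in (0:ℝ)..t, E β s) * b

/-- The limit mean `m₁(b,β) = x₀/(1 + ‖K‖_{L¹}|β|) + b/|β|` (with `1/∞ = 0`). -/
noncomputable def m1VOU (K : ℝ → ℝ) (x₀ b β : ℝ) : ℝ :=
  x₀ * ((1 + normL1 K * ENNReal.ofReal |β|)⁻¹).toReal + b / |β|

/-- Covariance of the VOU process: `cov(X_t, X_s) = σ²∫₀^{s∧t} E_β(|t-s|+r)E_β(r) dr`. -/
noncomputable def covVOU (E : ℝ → ℝ → ℝ) (σ β s t : ℝ) : ℝ :=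
  σ ^ 2 * ∫ r in (0:ℝ)..(min s t), E β (|t - s| + r) * E β r

/-- Covariance of the stationary VOU process:
`cov(X^stat_t, X^stat_s) = σ²∫₀^∞ E_β(|t-s|+r)E_β(r) dr`. -/
noncomputable def covStatVOU (E : ℝ → ℝ → ℝ) (σ β s t : ℝ) : ℝ :=
  σ ^ 2 * ∫ r in Set.Ioi (0:ℝ), E β (|t - s| + r) * E β r

/-- `X` is a Gaussian process (over times in `S`) with mean function `m` and
covariance function `c`: every finite linear combination is Gaussian. -/
def IsGaussianProcessOn {Ω : Type*} [MeasurableSpace Ω] (P : Measure Ω) (S : Set ℝ)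
    (X : ℝ → Ω → ℝ) (m : ℝ → ℝ) (c : ℝ → ℝ → ℝ) : Prop :=
  (∀ t, Measurable (X t)) ∧
  ∀ (n : ℕ) (t : Fin n → ℝ) (a : Fin n → ℝ), (∀ i, t i ∈ S) →
    Measure.map (fun ω => ∑ i, a i * X (t i) ω) P =
      ProbabilityTheory.gaussianReal (∑ i, a i * m (t i))
        (Real.toNNReal (∑ i, ∑ j, a i * a j * c (t i) (t j)))

/-! ### Auxiliary lemmas -/

lemma vou_shift_integrable {f : ℝ → ℝ} (hf : IntegrableOn f (Ioi 0)) {h : ℝ} (hh : 0 ≤ h) :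
    IntegrableOn (fun r => f (h + r)) (Ioi 0) := by
  have h1 : Integrable ((Ioi h).indicator f) :=
    (integrable_indicator_iff measurableSet_Ioi).2 (hf.mono_set (Ioi_subset_Ioi hh))
  have h2 := h1.comp_add_left h
  have h3 := h2.integrableOn (s := Ioi 0)
  refine h3.congr_fun (fun r hr => ?_) measurableSet_Ioi
  have : h < h + r := by simpa using hr
  simp [indicator, this]

lemma vou_shift_integral (f : ℝ → ℝ) (h : ℝ) :
    ∫ r in Ioi (0:ℝ), f (h + r) = ∫ r in Ioi h, f r := by
  rw [← integral_indicator measurableSet_Ioi, ← integral_indicator measurableSet_Ioi,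
    ← integral_add_left_eq_self ((Ioi h).indicator f) h]
  congr 1
  ext r
  simp [indicator]

lemma vou_corr_bound {f : ℝ → ℝ} (hf : IntegrableOn (fun r => f r ^ 2) (Ioi 0))
    {h ε : ℝ} (hh : 0 ≤ h) (hε : 0 < ε) :
    |∫ r in Ioi (0:ℝ), f (h + r) * f r| ≤
      ε * (∫ r in Ioi (0:ℝ), f r ^ 2) + (4 * ε)⁻¹ * ∫ r in Ioi h, f r ^ 2 := by
  have hs := vou_shift_integrable hf hh
  rw [← vou_shift_integral (fun r => f r ^ 2) h, ← integral_const_mul, ← integral_const_mul,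
    ← integral_add (hf.const_mul _) (hs.const_mul _), ← Real.norm_eq_abs]
  refine norm_integral_le_of_norm_le ((hf.const_mul _).add (hs.const_mul _)) (ae_of_all _ ?_)
  intro r
  simp only [Real.norm_eq_abs, abs_mul]
  rw [← sq_abs (f r), ← sq_abs (f (h + r))]
  have key : ε * |f r| ^ 2 + (4 * ε)⁻¹ * |f (h + r)| ^ 2 - |f (h + r)| * |f r|
      = ε * (|f r| - (2 * ε)⁻¹ * |f (h + r)|) ^ 2 := by
    field_simp
    ring
  nlinarith [mul_nonneg hε.le (sq_nonneg (|f r| - (2 * ε)⁻¹ * |f (h + r)|))]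

lemma vou_corr_le {f : ℝ → ℝ} (hf : IntegrableOn (fun r => f r ^ 2) (Ioi 0))
    {h : ℝ} (hh : 0 ≤ h) :
    |∫ r in Ioi (0:ℝ), f (h + r) * f r| ≤ ∫ r in Ioi (0:ℝ), f (0 + r) * f r := by
  have h1 := vou_corr_bound hf hh (ε := 1 / 2) (by norm_num)
  have h2 : ∫ r in Ioi h, f r ^ 2 ≤ ∫ r in Ioi (0:ℝ), f r ^ 2 :=
    setIntegral_mono_set hf (ae_of_all _ fun r => sq_nonneg _)
      (Ioi_subset_Ioi hh).eventuallyLE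
  have h3 : ∫ r in Ioi (0:ℝ), f (0 + r) * f r = ∫ r in Ioi (0:ℝ), f r ^ 2 := by
    congr 1; ext r; rw [zero_add, sq]
  rw [h3]
  norm_num at h1
  linarith

lemma vou_corr_tendsto {f : ℝ → ℝ} (hf : IntegrableOn (fun r => f r ^ 2) (Ioi 0)) :
    Tendsto (fun h : ℝ => ∫ r in Ioi (0:ℝ), f (h + r) * f r) atTop (𝓝 0) := by
  have hT : Tendsto (fun h : ℝ => ∫ r in Ioi h, f r ^ 2) atTop (𝓝 0) := by
    have h1 := intervalIntegral_tendsto_integral_Ioi (0:ℝ) hf tendsto_id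
    have h2 := (tendsto_const_nhds (x := ∫ r in Ioi (0:ℝ), f r ^ 2)).sub h1
    rw [sub_self] at h2
    refine h2.congr' ?_
    filter_upwards [eventually_ge_atTop (0:ℝ)] with h hh
    have h3 := intervalIntegral.integral_interval_add_Ioi hf (hf.mono_set (Ioi_subset_Ioi hh))
    simp only [id]
    linarith
  rw [Metric.tendsto_nhds]
  intro e he
  set C := ∫ r in Ioi (0:ℝ), f r ^ 2 with hC
  have hC0 : 0 ≤ C := integral_nonneg fun r => sq_nonneg _
  set ε := e / (2 * (C + 1)) with hεd
  have hε : 0 < ε := by positivity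
  have hTe := (Metric.tendsto_nhds.1 hT) (2 * ε * e) (by positivity)
  filter_upwards [eventually_ge_atTop (0:ℝ), hTe] with h hh hlt
  have h1 := vou_corr_bound hf hh hε
  rw [Real.dist_eq, sub_zero] at hlt ⊢
  have h2 : (4 * ε)⁻¹ * ∫ r in Ioi h, f r ^ 2 < e / 2 := by
    have := (le_abs_self _).trans_lt hlt
    calc _ < (4 * ε)⁻¹ * (2 * ε * e) := by gcongr
      _ = e / 2 := by field_simp; ring
  have h3 : ε * C ≤ e / 2 := by
    rw [hεd, div_mul_eq_mul_div, div_le_div_iff₀ (by positivity) (by norm_num)]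
    nlinarith
  linarith

section Gauss

open ProbabilityTheory

variable {Ω : Type*} [MeasurableSpace Ω] {P : Measure Ω} [IsProbabilityMeasure P]
  {X : ℝ → Ω → ℝ} {m : ℝ} {c : ℝ → ℝ → ℝ}

lemma vou_law_fintype (hX : IsGaussianProcessOn P Set.univ X (fun _ => m) c)
    {ι : Type*} [Fintype ι] (t a : ι → ℝ) :
    Measure.map (fun ω => ∑ i, a i * X (t i) ω) P =
      gaussianReal (∑ i, a i * m) (Real.toNNReal (∑ i, ∑ j, a i * a j * c (t i) (t j))) := by
  have e := (Fintype.equivFin ι).symm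
  have h := hX.2 _ (t ∘ e) (a ∘ e) (fun _ => mem_univ _)
  simp only [Function.comp] at h
  have h1 : ∀ ω, ∑ i, a (e i) * X (t (e i)) ω = ∑ i, a i * X (t i) ω := fun ω =>
    e.sum_comp (fun i => a i * X (t i) ω)
  have h2 : ∑ i, a (e i) * m = ∑ i, a i * m := e.sum_comp (fun i => a i * m)
  have h3 : ∑ i, ∑ j, a (e i) * a (e j) * c (t (e i)) (t (e j))
      = ∑ i, ∑ j, a i * a j * c (t i) (t j) := by
    rw [← e.sum_comp (fun i => ∑ j, a i * a j * c (t i) (t j))]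
    refine Finset.sum_congr rfl fun i _ => ?_
    exact e.sum_comp (fun j => a (e i) * a j * c (t (e i)) (t j))
  simpa only [h1, h2, h3] using h

lemma vou_law_one (hX : IsGaussianProcessOn P Set.univ X (fun _ => m) c) (t : ℝ) :
    Measure.map (X t) P = gaussianReal m (Real.toNNReal (c t t)) := by
  have := vou_law_fintype hX (ι := Unit) (fun _ => t) (fun _ => 1)
  simpa using this

lemma vou_memLp (hX : IsGaussianProcessOn P Set.univ X (fun _ => m) c) (t : ℝ) :
    MemLp (X t) 2 P := by
  have h : MemLp id 2 (Measure.map (X t) P) := by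
    rw [vou_law_one hX t]; exact memLp_id_gaussianReal' 2 (by simp)
  exact (memLp_map_measure_iff aestronglyMeasurable_id (hX.1 t).aemeasurable).1 h

lemma vou_variance (hX : IsGaussianProcessOn P Set.univ X (fun _ => m) c)
    {ι : Type*} [Fintype ι] (t a : ι → ℝ) :
    Var[fun ω => ∑ i, a i * X (t i) ω; P] =
      (Real.toNNReal (∑ i, ∑ j, a i * a j * c (t i) (t j)) : ℝ) := by
  have hm : Measurable (fun ω => ∑ i, a i * X (t i) ω) :=
    Finset.measurable_sum _ fun i _ => (hX.1 (t i)).const_mul _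
  rw [← variance_id_map hm.aemeasurable, vou_law_fintype hX t a, variance_id_gaussianReal]

/-- Under the Cauchy-Schwarz type bound, `c` is the true covariance. -/
lemma vou_cov (hX : IsGaussianProcessOn P Set.univ X (fun _ => m) c)
    {c0 : ℝ} (hc0 : ∀ t, c t t = c0) (hsymm : ∀ s t, c s t = c t s)
    (hb : ∀ s t, |c s t| ≤ c0) (s t : ℝ) : cov[X s, X t; P] = c s t := by
  have hc0' : 0 ≤ c0 := (abs_nonneg _).trans (hb 0 0)
  have h1 : ∀ t, Var[X t; P] = c0 := by
    intro t
    have := vou_variance hX (ι := Unit) (fun _ => t) (fun _ => 1)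
    simpa [hc0, hc0'] using this
  have h2 := vou_variance hX (ι := Fin 2) ![s, t] ![1, 1]
  simp only [Fin.sum_univ_two, Matrix.cons_val_zero, Matrix.cons_val_one, one_mul, hc0,
    hsymm t s] at h2
  rw [variance_fun_add (vou_memLp hX s) (vou_memLp hX t), h1, h1, Real.coe_toNNReal] at h2
  · linarith
  · have := (abs_le.1 (hb s t)).1
    linarith

lemma vou_quad_nonneg (hX : IsGaussianProcessOn P Set.univ X (fun _ => m) c)
    {c0 : ℝ} (hc0 : ∀ t, c t t = c0) (hsymm : ∀ s t, c s t = c t s)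
    (hb : ∀ s t, |c s t| ≤ c0) {ι : Type*} [Fintype ι] (t a : ι → ℝ) :
    0 ≤ ∑ i, ∑ j, a i * a j * c (t i) (t j) := by
  have h := variance_nonneg (fun ω => ∑ i, a i * X (t i) ω) P
  rw [variance_fun_sum (fun i => (vou_memLp hX (t i)).const_mul (a i))] at h
  convert h using 4 with i _ j _
  rw [covariance_const_mul_left, covariance_const_mul_right, vou_cov hX hc0 hsymm hb]
  ring

lemma vou_charFun (hX : IsGaussianProcessOn P Set.univ X (fun _ => m) c)
    {c0 : ℝ} (hc0 : ∀ t, c t t = c0) (hsymm : ∀ s t, c s t = c t s)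
    (hb : ∀ s t, |c s t| ≤ c0) {ι : Type*} [Fintype ι] (t a : ι → ℝ) :
    ∫ ω, Complex.exp (((∑ i, a i * X (t i) ω : ℝ) : ℂ) * Complex.I) ∂P =
      Complex.exp (((∑ i, a i * m : ℝ) : ℂ) * Complex.I -
        ((∑ i, ∑ j, a i * a j * c (t i) (t j) : ℝ) : ℂ) / 2) := by
  have hm : Measurable (fun ω => ∑ i, a i * X (t i) ω) :=
    Finset.measurable_sum _ fun i _ => (hX.1 (t i)).const_mul _
  have h := charFun_gaussianReal (μ := ∑ i, a i * m)
    (v := Real.toNNReal (∑ i, ∑ j, a i * a j * c (t i) (t j))) 1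
  rw [← vou_law_fintype hX t a, charFun_apply_real,
    integral_map hm.aemeasurable (by fun_prop)] at h
  have hco : ((Real.toNNReal (∑ i, ∑ j, a i * a j * c (t i) (t j)) : ℝ≥0) : ℂ)
      = ((∑ i, ∑ j, a i * a j * c (t i) (t j) : ℝ) : ℂ) := by
    rw [← Complex.ofReal_inj.2 (Real.coe_toNNReal _ (vou_quad_nonneg hX hc0 hsymm hb t a))]
  rw [hco] at h
  simpa using h

/-- Weak convergence for a stationary Gaussian process with vanishing correlation. -/
lemma vou_factorization {g : ℝ → ℝ}
    (hX : IsGaussianProcessOn P Set.univ X (fun _ => m) (fun s t => g |t - s|))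
    (hb : ∀ h, 0 ≤ h → |g h| ≤ g 0) (hg : Tendsto g atTop (𝓝 0))
    (n N : ℕ) (t : Fin n → ℝ) (s : Fin N → ℝ)
    (F : BoundedContinuousFunction ((Fin n → ℝ) × (Fin N → ℝ)) ℝ) :
    Tendsto
      (fun h : ℝ => ∫ ω, F (fun i => X (t i) ω, fun j => X (s j + h) ω) ∂P)
      atTop
      (nhds (∫ z, F z ∂((Measure.map (fun ω => fun i : Fin n => X (t i) ω) P).prod
        (Measure.map (fun ω => fun j : Fin N => X (s j) ω) P)))) := by
  have hc0 : ∀ t : ℝ, (fun s t => g |t - s|) t t = g 0 := by intro t; simp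
  have hsymm : ∀ s t : ℝ, (fun s t => g |t - s|) s t = (fun s t => g |t - s|) t s := by
    intro s t; simp only [abs_sub_comm]
  have hbb : ∀ s t : ℝ, |(fun s t => g |t - s|) s t| ≤ g 0 := fun s t => hb _ (abs_nonneg _)
  have hcf := fun {ι : Type} [Fintype ι] (t a : ι → ℝ) => vou_charFun hX hc0 hsymm hbb t a
  have hmX := hX.1
  have hmt : Measurable (fun ω => fun i : Fin n => X (t i) ω) := measurable_pi_lambda _ fun i => hmX _
  have hms : Measurable (fun ω => fun i : Fin N => X (s i) ω) := measurable_pi_lambda _ fun i => hmX _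
  let J : (Fin n → ℝ) × (Fin N → ℝ) → EuclideanSpace ℝ (Fin n ⊕ Fin N) := fun z => WithLp.toLp 2 (Sum.elim z.1 z.2)
  have hJ : Continuous J := by
    refine (PiLp.continuous_toLp 2 _).comp (continuous_pi fun k => ?_)
    cases k <;> simp <;> fun_prop
  let L : C(EuclideanSpace ℝ (Fin n ⊕ Fin N), (Fin n → ℝ) × (Fin N → ℝ)) :=
    ⟨fun v => (fun i => v (Sum.inl i), fun j => v (Sum.inr j)), by fun_prop⟩
  have hLJ : ∀ z, L (J z) = z := fun z => rfl
  let Z : ℝ → Ω → (Fin n → ℝ) × (Fin N → ℝ) :=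
    fun h ω => (fun i => X (t i) ω, fun j => X (s j + h) ω)
  have hZ : ∀ h, Measurable (Z h) := fun h =>
    (measurable_pi_lambda _ fun i => hmX _).prodMk (measurable_pi_lambda _ fun i => hmX _)
  have : IsProbabilityMeasure (Measure.map (fun ω => fun i : Fin n => X (t i) ω) P) :=
    Measure.isProbabilityMeasure_map hmt.aemeasurable
  have : IsProbabilityMeasure (Measure.map (fun ω => fun i : Fin N => X (s i) ω) P) :=
    Measure.isProbabilityMeasure_map hms.aemeasurable
  set ν := (Measure.map (fun ω => fun i : Fin n => X (t i) ω) P).prod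
        (Measure.map (fun ω => fun j : Fin N => X (s j) ω) P) with hν
  let μ : ℝ → ProbabilityMeasure (EuclideanSpace ℝ (Fin n ⊕ Fin N)) := fun h =>
    ⟨P.map (fun ω => J (Z h ω)),
      Measure.isProbabilityMeasure_map (hJ.measurable.comp (hZ h)).aemeasurable⟩
  let μ₀ : ProbabilityMeasure (EuclideanSpace ℝ (Fin n ⊕ Fin N)) :=
    ⟨ν.map J, Measure.isProbabilityMeasure_map hJ.measurable.aemeasurable⟩
  have hJZ : ∀ h, AEMeasurable (fun ω => J (Z h ω)) P := fun h =>
    (hJ.measurable.comp (hZ h)).aemeasurable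
  rw [tendsto_iff_seq_tendsto]
  intro x hx
  have main : Tendsto (fun k => μ (x k)) atTop (𝓝 μ₀) := by
    rw [ProbabilityMeasure.tendsto_iff_tendsto_charFun]
    intro u
    have e0 : ∀ z : (Fin n → ℝ) × (Fin N → ℝ), inner ℝ (J z) u =
        (∑ i, u (Sum.inl i) * z.1 i) + ∑ j, u (Sum.inr j) * z.2 j := by
      intro z
      simp [J, PiLp.inner_apply]
    have e1 : ∀ h, charFun (μ h : Measure (EuclideanSpace ℝ (Fin n ⊕ Fin N))) u =
        Complex.exp (((∑ k, u k * m : ℝ) : ℂ) * Complex.I -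
        ((∑ k, ∑ l, u k * u l * g |Sum.elim t (fun j => s j + h) l
          - Sum.elim t (fun j => s j + h) k| : ℝ) : ℂ) / 2) := by
      intro h
      rw [← hcf (Sum.elim t (fun j => s j + h)) (fun k => u k)]
      change charFun (P.map (fun ω => J (Z h ω))) u = _
      rw [charFun_apply, integral_map (hJZ h) (by fun_prop)]
      congr 1
      ext ω
      rw [e0, Fintype.sum_sum_type]
      simp [Z]
    have e2 : charFun (μ₀ : Measure (EuclideanSpace ℝ (Fin n ⊕ Fin N))) u =
        Complex.exp (((∑ i, u (Sum.inl i) * m : ℝ) : ℂ) * Complex.I -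
        ((∑ i, ∑ j, u (Sum.inl i) * u (Sum.inl j) * g |t j - t i| : ℝ) : ℂ) / 2) *
        Complex.exp (((∑ i, u (Sum.inr i) * m : ℝ) : ℂ) * Complex.I -
        ((∑ i, ∑ j, u (Sum.inr i) * u (Sum.inr j) * g |s j - s i| : ℝ) : ℂ) / 2) := by
      rw [← hcf t (fun i => u (Sum.inl i)), ← hcf s (fun i => u (Sum.inr i))]
      change charFun (ν.map J) u = _
      rw [charFun_apply, integral_map hJ.measurable.aemeasurable (by fun_prop)]
      have : ∀ z, Complex.exp ((inner ℝ (J z) u : ℝ) * Complex.I) =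
          Complex.exp (((∑ i, u (Sum.inl i) * z.1 i : ℝ) : ℂ) * Complex.I) *
          Complex.exp (((∑ j, u (Sum.inr j) * z.2 j : ℝ) : ℂ) * Complex.I) := by
        intro z
        rw [e0, Complex.ofReal_add, add_mul, Complex.exp_add]
      simp_rw [this]
      rw [hν, integral_prod_mul
        (fun z : Fin n → ℝ => Complex.exp (((∑ i, u (Sum.inl i) * z i : ℝ) : ℂ) * Complex.I))
        (fun z : Fin N → ℝ => Complex.exp (((∑ i, u (Sum.inr i) * z i : ℝ) : ℂ) * Complex.I)),
        integral_map hmt.aemeasurable (Continuous.aestronglyMeasurable (by fun_prop)),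
        integral_map hms.aemeasurable (Continuous.aestronglyMeasurable (by fun_prop))]
    simp_rw [e1]
    rw [e2, ← Complex.exp_add]
    refine (Complex.continuous_exp.tendsto _).comp ?_
    have hq : Tendsto (fun k => ∑ p, ∑ q, u p * u q * g |Sum.elim t (fun j => s j + x k) q
          - Sum.elim t (fun j => s j + x k) p|) atTop
        (𝓝 ((∑ i, ∑ j, u (Sum.inl i) * u (Sum.inl j) * g |t j - t i|) +
          ∑ i, ∑ j, u (Sum.inr i) * u (Sum.inr j) * g |s j - s i|)) := by
      simp only [Fintype.sum_sum_type, Sum.elim_inl, Sum.elim_inr, add_sub_add_right_eq_sub]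
      have hcross : ∀ a b : ℝ, Tendsto (fun k => g |b + x k - a|) atTop (𝓝 0) := by
        intro a b
        refine hg.comp (tendsto_abs_atTop_atTop.comp ?_)
        have : (fun k => b + x k - a) = fun k => x k + (b - a) := by ext; ring
        rw [this]
        exact tendsto_atTop_add_const_right _ _ hx
      have hcross' : ∀ a b : ℝ, Tendsto (fun k => g |a - (b + x k)|) atTop (𝓝 0) := by
        intro a b
        simp_rw [abs_sub_comm a]
        exact hcross a b
      refine Tendsto.add ?_ ?_
      · refine tendsto_finsetSum _ fun i _ => ?_
        have := tendsto_finsetSum (Finset.univ : Finset (Fin N)) fun j _ =>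
          (hcross (t i) (s j)).const_mul (u (Sum.inl i) * u (Sum.inr j))
        simp only [mul_zero, Finset.sum_const_zero] at this
        simpa using (tendsto_const_nhds
          (x := ∑ j, u (Sum.inl i) * u (Sum.inl j) * g |t j - t i|)).add this
      · refine tendsto_finsetSum _ fun i _ => ?_
        have := tendsto_finsetSum (Finset.univ : Finset (Fin n)) fun j _ =>
          (hcross' (t j) (s i)).const_mul (u (Sum.inr i) * u (Sum.inl j))
        simp only [mul_zero, Finset.sum_const_zero] at this
        simpa using this.add (tendsto_const_nhds
          (x := ∑ j, u (Sum.inr i) * u (Sum.inr j) * g |s j - s i|))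
    have hq' := (((Complex.continuous_ofReal.tendsto _).comp hq).div_const 2).const_sub
      (((∑ k, u k * m : ℝ) : ℂ) * Complex.I)
    have hlim : ∀ a b p q : ℝ, ((a : ℂ) * Complex.I - (p : ℂ) / 2) +
        ((b : ℂ) * Complex.I - (q : ℂ) / 2) =
        ((a + b : ℝ) : ℂ) * Complex.I - ((p + q : ℝ) : ℂ) / 2 := by
      intro a b p q
      push_cast
      ring
    rw [hlim, ← Fintype.sum_sum_type (fun k => u k * m)]
    exact hq'
  rw [ProbabilityMeasure.tendsto_iff_forall_integral_tendsto] at main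
  have hF := main (F.compContinuous L)
  have a1 : ∀ h, ∫ v, (F.compContinuous L) v ∂(μ h : Measure (EuclideanSpace ℝ (Fin n ⊕ Fin N))) = ∫ ω, F (Z h ω) ∂P := by
    intro h
    change ∫ v, (F.compContinuous L) v ∂(P.map (fun ω => J (Z h ω))) = _
    rw [integral_map (hJZ h)
      (F.compContinuous L).continuous.measurable.aestronglyMeasurable]
    rfl
  have a2 : ∫ v, (F.compContinuous L) v ∂(μ₀ : Measure (EuclideanSpace ℝ (Fin n ⊕ Fin N))) = ∫ z, F z ∂ν := by
    change ∫ v, (F.compContinuous L) v ∂(ν.map J) = _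
    rw [integral_map hJ.measurable.aemeasurable
      (F.compContinuous L).continuous.measurable.aestronglyMeasurable]
    rfl
  simp_rw [a1] at hF
  rw [a2] at hF
  exact hF

/-- A Gaussian process with vanishing variances is constant, so its covariance can be taken `0`. -/
lemma vou_degenerate (hX : IsGaussianProcessOn P Set.univ X (fun _ => m) c)
    (hc : ∀ t, c t t = 0) :
    IsGaussianProcessOn P Set.univ X (fun _ => m) (fun _ _ => 0) := by
  have hae : ∀ t, X t =ᵐ[P] fun _ => m := by
    intro t
    have h := vou_law_one hX t
    rw [hc, Real.toNNReal_zero, gaussianReal_zero_var] at h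
    have h2 : ∀ᵐ y ∂(Measure.map (X t) P), y = m := by
      rw [h]; simp [ae_dirac_eq]
    exact ae_of_ae_map (hX.1 t).aemeasurable h2
  refine ⟨hX.1, fun n t a _ => ?_⟩
  have h1 : (fun ω => ∑ i, a i * X (t i) ω) =ᵐ[P] fun _ => ∑ i, a i * m := by
    have := ae_all_iff.2 fun i => hae (t i)
    filter_upwards [this] with ω hω
    simp [hω]
  rw [Measure.map_congr h1]
  simp [Measure.map_const, gaussianReal_zero_var]

end Gauss

/-- Asymptotic factorization of the finite-dimensional
distributions of the stationary VOU process: as `h → ∞`,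
`(X^stat_{t₁},…,X^stat_{t_n}, X^stat_{s₁+h},…,X^stat_{s_N+h})` converges weakly to
the product of the laws of `(X^stat_{t₁},…,X^stat_{t_n})` and of an independent copy
`(X̄_{s₁},…,X̄_{s_N})`. -/
theorem VOU_stationary_asymptotic_factorization
    (K : ℝ → ℝ) (γ x₀ σ b β : ℝ) (hσ : 0 < σ) (hβ : β < 0)
    (hVOU : AssumptionVOUKernel K γ)
    (E : ℝ → ℝ → ℝ)
    (hE : ∀ β' < (0:ℝ), SolvesResolventEq K β' (E β'))
    {Ω : Type*} [MeasurableSpace Ω] (P : Measure Ω) [IsProbabilityMeasure P]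
    (Xstat : ℝ → Ω → ℝ)
    (hXstat : IsGaussianProcessOn P Set.univ Xstat
      (fun _ => m1VOU K x₀ b β) (covStatVOU E σ β)) :
    ∀ (n N : ℕ) (t : Fin n → ℝ) (s : Fin N → ℝ),
      (∀ i, 0 ≤ t i) → StrictMono t → (∀ j, 0 ≤ s j) → StrictMono s →
      ∀ F : BoundedContinuousFunction ((Fin n → ℝ) × (Fin N → ℝ)) ℝ,
        Tendsto
          (fun h : ℝ => ∫ ω, F (fun i => Xstat (t i) ω, fun j => Xstat (s j + h) ω) ∂P)
          atTop
          (nhds (∫ z, F z ∂((Measure.map (fun ω => fun i : Fin n => Xstat (t i) ω) P).prod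
            (Measure.map (fun ω => fun j : Fin N => Xstat (s j) ω) P)))) := by
  intro n N t s _ _ _ _ F
  by_cases hint : IntegrableOn (fun r => E β r ^ 2) (Ioi 0)
  · refine vou_factorization (g := fun h => σ ^ 2 * ∫ r in Ioi (0:ℝ), E β (h + r) * E β r)
      hXstat (fun h hh => ?_) ?_ n N t s F
    · rw [abs_mul, abs_of_nonneg (sq_nonneg σ)]
      exact mul_le_mul_of_nonneg_left (vou_corr_le hint hh) (sq_nonneg σ)
    · simpa using (vou_corr_tendsto hint).const_mul (σ ^ 2)
  · -- the covariance is degenerate when `E β` is not square integrable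
    have hc : ∀ t, covStatVOU E σ β t t = 0 := by
      intro t
      have h0 : ∫ r in Ioi (0:ℝ), E β (|t - t| + r) * E β r = 0 := by
        have : (fun r => E β (|t - t| + r) * E β r) = fun r => E β r ^ 2 := by
          ext r; simp [sq]
        rw [this]
        exact integral_undef hint
      rw [covStatVOU, h0, mul_zero]
    exact vou_factorization (g := fun _ => 0) (vou_degenerate hXstat hc) (by simp)
      tendsto_const_nhds n N t s F

end
end

section
/- Let K_α(t) = t^{α−1}/Γ(α) be the fractional Riemann–Liouville kernel with α ∈ (1/2,1), let β < 0, and let E_β ∈ L²_loc(ℝ₊) be the unique solution of E_β(t) = K_α(t) + ∫₀^t K_α(t−s) β E_β(s) ds. Then ∫₀^∞ E_β(t)² dt = C_α |β|^{1/α − 2}, where C_α = (1/π) ∫₀^∞ du / (1 + 2u^α cos(πα/2) + u^{2α}). -/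
open MeasureTheory Set Filter Real
open scoped ENNReal NNReal Topology

noncomputable section

/-- The fractional Riemann–Liouville kernel `K_α(t) = t^{α-1}/Γ(α)`. -/
noncomputable def fractionalKernel (α t : ℝ) : ℝ := t ^ (α - 1) / Real.Gamma α

section aux
open FourierTransform SchwartzMap

lemma aux_memLp_fourier (f : ℝ → ℂ) (h1 : Integrable f) (h2 : MemLp f 2) :
    𝓕 f =ᵐ[volume] (𝓕 (h2.toLp f) : Lp ℂ 2 (volume : Measure ℝ)) := by
  have hc : Continuous (𝓕 f) := VectorFourier.fourierIntegral_continuous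
    Real.continuous_fourierChar (by exact continuous_inner) h1
  apply ae_eq_of_integral_contDiff_smul_eq
  · exact hc.locallyIntegrable
  · exact (Lp.memLp _).locallyIntegrable (by norm_num)
  intro g hg hgs
  have hgs' : HasCompactSupport (fun x => (g x : ℂ)) := hgs.comp_left (g := ((↑) : ℝ → ℂ)) rfl
  have hg' : ContDiff ℝ (⊤ : ℕ∞) (fun x => (g x : ℂ)) := Complex.ofRealCLM.contDiff.comp hg
  let φ : 𝓢(ℝ, ℂ) := hgs'.toSchwartzMap hg'
  have hφ : ∀ x, φ x = (g x : ℂ) := fun x => rfl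
  have e1 := congrArg (fun D : 𝓢'(ℝ, ℂ) => D φ) (Lp.fourier_toTemperedDistribution_eq (h2.toLp f))
  simp only [TemperedDistribution.fourier_apply, Lp.toTemperedDistribution_apply] at e1
  have e2 : ∫ x, (𝓕 φ) x • (h2.toLp f) x = ∫ x, (𝓕 φ) x • f x := by
    apply integral_congr_ae
    filter_upwards [h2.coeFn_toLp] with x hx
    rw [hx]
  have e3 : ∫ x, (𝓕 φ) x • f x = ∫ x, φ x • 𝓕 f x := by
    have := VectorFourier.integral_fourierIntegral_smul_eq_flip (L := innerₗ ℝ)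
      (μ := volume) (ν := volume) (f := (φ : ℝ → ℂ)) (g := f)
      Real.continuous_fourierChar continuous_inner φ.integrable h1
    rw [flip_innerₗ] at this
    rw [SchwartzMap.fourier_coe]
    exact this
  calc ∫ x, g x • 𝓕 f x = ∫ x, φ x • 𝓕 f x := by
        simp [hφ]
    _ = ∫ x, φ x • (𝓕 (h2.toLp f) : Lp ℂ 2 (volume : Measure ℝ)) x := by rw [← e3, ← e2, e1]
    _ = _ := by simp [hφ]

lemma aux_plancherel (f : ℝ → ℂ) (h1 : Integrable f) (h2 : MemLp f 2) :
    Integrable (fun y => ‖𝓕 f y‖ ^ 2) ∧ ∫ y, ‖𝓕 f y‖ ^ 2 = ∫ x, ‖f x‖ ^ 2 := by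
  have hae := aux_memLp_fourier f h1 h2
  have hm : MemLp (𝓕 f) 2 := (memLp_congr_ae hae).2 (Lp.memLp _)
  have hi := (memLp_two_iff_integrable_sq_norm hm.1).1 hm
  refine ⟨hi, ?_⟩
  have hn := Lp.norm_fourier_eq (h2.toLp f)
  have key : ∀ F : Lp ℂ 2 (volume : Measure ℝ), ∫ x, ‖F x‖ ^ 2 = ‖F‖ ^ 2 := by
    intro F
    have := L2.inner_def (𝕜 := ℂ) F F
    rw [inner_self_eq_norm_sq_to_K] at this
    simp_rw [inner_self_eq_norm_sq_to_K] at this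
    have h3 : (∫ a, (((‖F a‖ : ℝ) : ℂ)) ^ 2) = ((∫ a, ‖F a‖ ^ 2 : ℝ) : ℂ) := by
      rw [← integral_complex_ofReal]; congr; ext; push_cast; rfl
    have h4 := this.trans h3
    exact (Complex.ofReal_injective (by push_cast at h4 ⊢; exact h4)).symm
  calc ∫ y, ‖𝓕 f y‖ ^ 2 = ∫ y, ‖(𝓕 (h2.toLp f) : Lp ℂ 2 (volume : Measure ℝ)) y‖ ^ 2 := by
        apply integral_congr_ae; filter_upwards [hae] with x hx; rw [hx]
    _ = ∫ x, ‖(h2.toLp f) x‖ ^ 2 := by rw [key, key, hn]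
    _ = _ := by
        apply integral_congr_ae; filter_upwards [h2.coeFn_toLp] with x hx; rw [hx]

end aux

section laplace
open FourierTransform

lemma aux_rpow_exp_int {s l : ℝ} (hs : -1 < s) (hl : 0 < l) :
    IntegrableOn (fun t : ℝ => Real.exp (-l * t) * t ^ s) (Ioi 0) := by
  have := integrableOn_rpow_mul_exp_neg_mul_rpow (s := s) (p := 1) (b := l) hs one_pos hl
  refine this.congr_fun (fun t ht => ?_) measurableSet_Ioi
  simp [mul_comm]

lemma aux_laplace {α : ℝ} (hα : 0 < α) (z : ℂ) (hz : 0 < z.re) :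
    ∫ t in Ioi (0:ℝ), ((t ^ (α - 1) : ℝ) : ℂ) * Complex.exp (-z * t) =
      (Real.Gamma α : ℂ) * z ^ (-(α : ℂ)) := by
  let d : ℝ → ℝ≥0 := fun t => Real.toNNReal (t ^ (α - 1))
  have hd : Measurable d := by fun_prop
  let μ : Measure ℝ := (volume.restrict (Ioi (0:ℝ))).withDensity (fun t => (d t : ℝ≥0∞))
  let X : ℝ → ℝ := fun t => -t
  have hdt : ∀ t ∈ Ioi (0:ℝ), (d t : ℝ) = t ^ (α - 1) := fun t ht =>
    Real.coe_toNNReal _ (Real.rpow_nonneg (le_of_lt ht) _)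
  have hset : ∀ l : ℝ, 0 < l → l ∈ ProbabilityTheory.integrableExpSet X μ := by
    intro l hl
    change Integrable (fun t => Real.exp (l * (-t))) μ
    rw [integrable_withDensity_iff_integrable_smul hd]
    refine (aux_rpow_exp_int (s := α - 1) (by linarith) hl).congr_fun (fun t ht => ?_)
      measurableSet_Ioi
    simp only [NNReal.smul_def, hdt t ht, smul_eq_mul]
    rw [mul_comm]; congr 2; ring
  have hU : ∀ w : ℂ, 0 < w.re → w.re ∈ interior (ProbabilityTheory.integrableExpSet X μ) := by
    intro w hw
    exact interior_mono (s := Ioi 0) (fun l hl => hset l hl) (by rw [isOpen_Ioi.interior_eq]; exact hw)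
  have hF : ∀ w : ℂ, ProbabilityTheory.complexMGF X μ w =
      ∫ t in Ioi (0:ℝ), ((t ^ (α - 1) : ℝ) : ℂ) * Complex.exp (-w * t) := by
    intro w
    change ∫ t, Complex.exp (w * ((-t : ℝ) : ℂ)) ∂μ = _
    rw [integral_withDensity_eq_integral_smul hd]
    refine setIntegral_congr_fun measurableSet_Ioi (fun t ht => ?_)
    simp only [NNReal.smul_def, hdt t ht, Complex.real_smul]
    congr 2; push_cast; ring
  rw [← hF]
  have han1 : AnalyticOnNhd ℂ (ProbabilityTheory.complexMGF X μ) {w | 0 < w.re} :=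
    ProbabilityTheory.analyticOnNhd_complexMGF.mono (fun w hw => hU w hw)
  have hopen : IsOpen {w : ℂ | 0 < w.re} := isOpen_lt continuous_const Complex.continuous_re
  have han2 : AnalyticOnNhd ℂ (fun w : ℂ => (Real.Gamma α : ℂ) * w ^ (-(α : ℂ))) {w | 0 < w.re} := by
    apply DifferentiableOn.analyticOnNhd _ hopen
    intro w hw
    have : w ∈ Complex.slitPlane := Or.inl hw
    exact ((differentiableAt_id.cpow_const this).const_mul _).differentiableWithinAt
  have hconn : IsPreconnected {w : ℂ | 0 < w.re} := (convex_halfSpace_re_gt 0).isPreconnected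
  have hreal : ∀ l : ℝ, 0 < l → ProbabilityTheory.complexMGF X μ l =
      (Real.Gamma α : ℂ) * (l : ℂ) ^ (-(α : ℂ)) := by
    intro l hl
    rw [hF]
    have h := Complex.integral_cpow_mul_exp_neg_mul_Ioi (a := α) (r := l) (by simpa using hα) hl
    rw [Complex.Gamma_ofReal] at h
    rw [mul_comm, Complex.cpow_neg, ← Complex.inv_cpow, ← one_div]
    · rw [← h]
      refine setIntegral_congr_fun measurableSet_Ioi (fun t ht => ?_)
      rw [Complex.ofReal_cpow (le_of_lt ht)]
      push_cast
      congr 2; ring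
    · rw [Complex.arg_ofReal_of_nonneg hl.le]; exact Real.pi_pos.ne
  refine han1.eqOn_of_preconnected_of_frequently_eq han2 hconn (z₀ := 1) (by simp) ?_ hz
  have ht : Tendsto (fun l : ℝ => (l : ℂ)) (𝓝[≠] 1) (𝓝[≠] 1) := by
    refine tendsto_nhdsWithin_iff.2 ⟨?_, ?_⟩
    · exact (Complex.continuous_ofReal.tendsto' 1 1 (by simp)).mono_left nhdsWithin_le_nhds
    · filter_upwards [self_mem_nhdsWithin] with l hl
      simpa using hl
  refine ht.frequently ?_
  apply Eventually.frequently
  filter_upwards [nhdsWithin_le_nhds (Ioi_mem_nhds (show (0:ℝ) < 1 by norm_num))] with l hl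
  exact hreal l hl

/-- damped kernel -/
def auxK (α l : ℝ) : ℝ → ℝ :=
  (Ioi (0:ℝ)).indicator (fun t => Real.exp (-l * t) * fractionalKernel α t)

lemma auxK_int {α l : ℝ} (hα : 0 < α) (hl : 0 < l) : Integrable (auxK α l) := by
  unfold auxK
  rw [integrable_indicator_iff measurableSet_Ioi]
  refine IntegrableOn.congr_fun ((aux_rpow_exp_int (s := α - 1) (by linarith) hl).div_const
    (Real.Gamma α)) (fun t ht => ?_) measurableSet_Ioi
  simp only [fractionalKernel]; ring

lemma auxK_sq {α l : ℝ} (hα : 1/2 < α) (hl : 0 < l) : Integrable (fun t => (auxK α l t) ^ 2) := by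
  have : (fun t => (auxK α l t) ^ 2) = (Ioi (0:ℝ)).indicator
      (fun t => (Real.exp (-l * t) * fractionalKernel α t) ^ 2) := by
    ext t
    by_cases ht : t ∈ Ioi (0:ℝ) <;> simp only [auxK, indicator, ht, if_true, if_false]
    norm_num
  rw [this, integrable_indicator_iff measurableSet_Ioi]
  refine IntegrableOn.congr_fun ((aux_rpow_exp_int (s := 2 * (α - 1)) (l := 2 * l) (by linarith)
    (by linarith)).div_const (Real.Gamma α ^ 2)) (fun t ht => ?_) measurableSet_Ioi
  have h0 : (0:ℝ) ≤ t := le_of_lt ht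
  have e1 : t ^ (2 * (α - 1)) = (t ^ (α - 1)) ^ 2 := by
    rw [mul_comm, Real.rpow_mul h0]; norm_num
  have e2 : Real.exp (-(2 * l) * t) = Real.exp (-l * t) ^ 2 := by
    rw [← Real.exp_nat_mul]; congr 1; push_cast; ring
  simp only [fractionalKernel, e1, e2]; ring

lemma auxK_fourier {α l : ℝ} (hα : 0 < α) (hl : 0 < l) (y : ℝ) :
    𝓕 (fun t => (auxK α l t : ℂ)) y = ((l : ℂ) + (2 * π * y : ℝ) * Complex.I) ^ (-(α : ℂ)) := by
  have hG : (Real.Gamma α : ℂ) ≠ 0 := by exact_mod_cast (Real.Gamma_pos_of_pos hα).ne'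
  rw [Real.fourier_real_eq_integral_exp_smul]
  have h := aux_laplace hα ((l : ℂ) + (2 * π * y : ℝ) * Complex.I) (by simpa using hl)
  rw [← mul_right_inj' hG, ← h, ← integral_const_mul, ← integral_indicator measurableSet_Ioi]
  congr 1; ext t
  by_cases ht : t ∈ Ioi (0:ℝ)
  · simp only [auxK, indicator_of_mem ht, fractionalKernel, smul_eq_mul]
    push_cast
    have : Complex.exp (-(↑l + 2 * ↑π * ↑y * Complex.I) * ↑t) =
      Complex.exp (↑(-2 * π * t * y) * Complex.I) * Complex.exp (-l * t) := by
      rw [← Complex.exp_add]; congr 1; push_cast; ring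
    rw [this]
    push_cast
    field_simp
  · simp [auxK, indicator_of_notMem ht]

end laplace

section conv
open FourierTransform

def auxConv (f k : ℝ → ℝ) (x : ℝ) : ℝ := ∫ s, f s * k (x - s)

lemma auxConv_int {f k : ℝ → ℝ} (hf : Integrable f) (hk : Integrable k) :
    Integrable (auxConv f k) :=
  hf.integrable_convolution (ContinuousLinearMap.mul ℝ ℝ) hk

lemma auxConv_fourier {f k : ℝ → ℝ} (hf : Integrable f) (hk : Integrable k) (y : ℝ) :
    𝓕 (fun x => (auxConv f k x : ℂ)) y =
      𝓕 (fun x => (f x : ℂ)) y * 𝓕 (fun x => (k x : ℂ)) y := by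
  have hf' : Integrable (fun x => (f x : ℂ)) := hf.ofReal
  have hk' : Integrable (fun x => (k x : ℂ)) := hk.ofReal
  rw [← Real.fourier_mul_convolution_eq hf' hk']
  refine congrArg (fun F : ℝ → ℂ => 𝓕 F y) ?_
  ext x
  simp only [auxConv, MeasureTheory.convolution, ContinuousLinearMap.mul_apply']
  rw [← integral_complex_ofReal]
  congr 1; ext s; push_cast; rfl

lemma auxConv_bound {f k : ℝ → ℝ} (hf : Integrable (fun x => f x ^ 2))
    (hk : Integrable (fun x => k x ^ 2)) (x : ℝ) :
    |auxConv f k x| ≤ (∫ s, f s ^ 2) + ∫ s, k s ^ 2 := by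
  have hk' : Integrable (fun s => k (x - s) ^ 2) := hk.comp_sub_left x
  rw [← integral_sub_left_eq_self (fun s => k s ^ 2) volume x, ← integral_add hf hk',
    ← Real.norm_eq_abs]
  refine norm_integral_le_of_norm_le (hf.add hk') (Eventually.of_forall fun s => ?_)
  rw [Real.norm_eq_abs, abs_le]
  constructor <;> nlinarith [sq_nonneg (f s + k (x - s)), sq_nonneg (f s - k (x - s)),
    sq_nonneg (f s), sq_nonneg (k (x - s))]

lemma auxConv_sq {f k : ℝ → ℝ} (hf : Integrable f) (hk : Integrable k)
    (hf2 : Integrable (fun x => f x ^ 2)) (hk2 : Integrable (fun x => k x ^ 2)) :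
    Integrable (fun x => auxConv f k x ^ 2) := by
  have hi := auxConv_int hf hk
  refine Integrable.mono' (hi.norm.const_mul ((∫ s, f s ^ 2) + ∫ s, k s ^ 2))
    (hi.aestronglyMeasurable.pow 2) (Eventually.of_forall fun x => ?_)
  rw [norm_pow, sq, Real.norm_eq_abs]
  exact mul_le_mul_of_nonneg_right (auxConv_bound hf2 hk2 x) (abs_nonneg _)

lemma aux_plancherel_real {f : ℝ → ℝ} (hf : Integrable f) (hf2 : Integrable (fun x => f x ^ 2)) :
    Integrable (fun y => ‖𝓕 (fun x => (f x : ℂ)) y‖ ^ 2) ∧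
      ∫ y, ‖𝓕 (fun x => (f x : ℂ)) y‖ ^ 2 = ∫ x, f x ^ 2 := by
  have h := aux_plancherel (fun x => (f x : ℂ)) hf.ofReal
    ((memLp_two_iff_integrable_sq_norm hf.ofReal.aestronglyMeasurable).2 (by simpa using hf2))
  simpa using h

lemma aux_mul_int {f g : ℝ → ℝ} (hf : Integrable f) (hg : Integrable g)
    (hf2 : Integrable (fun x => f x ^ 2)) (hg2 : Integrable (fun x => g x ^ 2)) :
    Integrable (fun x => f x * g x) := by
  refine Integrable.mono' (hf2.add hg2) (hf.1.mul hg.1) (Eventually.of_forall fun s => ?_)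
  rw [Real.norm_eq_abs, abs_le]
  simp only [Pi.add_apply]
  constructor <;> nlinarith [sq_nonneg (f s + g s), sq_nonneg (f s - g s),
    sq_nonneg (f s), sq_nonneg (g s)]

lemma aux_fadd {f g : ℝ → ℝ} (hf : Integrable f) (hg : Integrable g) (b y : ℝ) :
    𝓕 (fun x => ((f x + b * g x : ℝ) : ℂ)) y =
      𝓕 (fun x => (f x : ℂ)) y + b * 𝓕 (fun x => (g x : ℂ)) y := by
  have hf' : Integrable (fun x => (f x : ℂ)) := hf.ofReal
  have hg' : Integrable (fun x => (g x : ℂ)) := hg.ofReal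
  have h1 := congrFun (VectorFourier.fourierIntegral_add (L := innerₗ ℝ) (μ := volume)
    Real.continuous_fourierChar continuous_inner hf' (hg'.smul (b : ℂ))) y
  have h2 := congrFun (VectorFourier.fourierIntegral_const_smul Real.fourierChar volume
    (innerₗ ℝ) (fun x => (g x : ℂ)) (b : ℂ)) y
  rw [Pi.add_apply, h2] at h1
  have e : (fun x => ((f x + b * g x : ℝ) : ℂ)) = (fun x => (f x : ℂ)) + (b : ℂ) • fun x => (g x : ℂ) := by
    ext x; simp
  rw [e]
  exact h1

lemma aux_pos {f k : ℝ → ℝ} (hf : Integrable f) (hk : Integrable k)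
    (hf2 : Integrable (fun x => f x ^ 2)) (hk2 : Integrable (fun x => k x ^ 2))
    (hre : ∀ y, 0 ≤ (𝓕 (fun x => (k x : ℂ)) y).re) :
    0 ≤ ∫ x, f x * auxConv f k x := by
  have hh := auxConv_int hf hk
  have hh2 := auxConv_sq hf hk hf2 hk2
  have hfh := aux_mul_int hf hh hf2 hh2
  set h := auxConv f k with hdef
  have hg : Integrable (fun x => f x + h x) := hf.add hh
  have esq : (fun x => (f x + h x) ^ 2) = fun x => f x ^ 2 + h x ^ 2 + 2 * (f x * h x) := by
    ext; ring
  have hg2 : Integrable (fun x => (f x + h x) ^ 2) := by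
    rw [esq]; exact (hf2.add hh2).add (hfh.const_mul 2)
  have hF := aux_plancherel_real hf hf2
  have hH := aux_plancherel_real hh hh2
  have hGG := aux_plancherel_real hg hg2
  have hval : ∫ x, (f x + h x) ^ 2 = (∫ x, f x ^ 2) + (∫ x, h x ^ 2) + 2 * ∫ x, f x * h x := by
    have hs : Integrable (fun x => f x ^ 2 + h x ^ 2) := hf2.add hh2
    rw [esq, integral_add hs (hfh.const_mul 2), integral_add hf2 hh2,
      integral_const_mul]
  have hadd : ∀ y, 𝓕 (fun x => ((f x + h x : ℝ) : ℂ)) y =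
      𝓕 (fun x => (f x : ℂ)) y * (1 + 𝓕 (fun x => (k x : ℂ)) y) := by
    intro y
    rw [mul_add, mul_one, ← auxConv_fourier hf hk]
    have h2 := aux_fadd hf hh 1 y
    simpa using h2
  have hconv : ∀ y, 𝓕 (fun x => (h x : ℂ)) y =
      𝓕 (fun x => (f x : ℂ)) y * 𝓕 (fun x => (k x : ℂ)) y := auxConv_fourier hf hk
  have hle : ∫ y, (‖𝓕 (fun x => (f x : ℂ)) y‖ ^ 2 + ‖𝓕 (fun x => (h x : ℂ)) y‖ ^ 2) ≤
      ∫ y, ‖𝓕 (fun x => ((f x + h x : ℝ) : ℂ)) y‖ ^ 2 := by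
    refine integral_mono (hF.1.add hH.1) hGG.1 (fun y => ?_)
    simp only [hadd, hconv, norm_mul, mul_pow]
    have e : ‖1 + 𝓕 (fun x => (k x : ℂ)) y‖ ^ 2 ≥ 1 + ‖𝓕 (fun x => (k x : ℂ)) y‖ ^ 2 := by
      have := hre y
      rw [Complex.sq_norm, Complex.sq_norm, Complex.normSq_apply, Complex.normSq_apply]
      simp only [Complex.add_re, Complex.add_im, Complex.one_re, Complex.one_im]
      nlinarith
    nlinarith [sq_nonneg ‖𝓕 (fun x => (f x : ℂ)) y‖]
  rw [integral_add hF.1 hH.1, hF.2, hH.2, hGG.2, hval] at hle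
  linarith

end conv

section solution
open FourierTransform

lemma auxE_eq_of_not {α β : ℝ} (hα : 0 < α) (hβ : β < 0) {E : ℝ → ℝ}
    (hE : SolvesResolventEq (fractionalKernel α) β E) {t : ℝ} (ht : 0 < t)
    (hn : ¬ AEStronglyMeasurable E (volume.restrict (Ioc 0 t))) : E t = fractionalKernel α t := by
  have h := hE.2 t ht
  rw [intervalIntegral.integral_undef, add_zero] at h
  · exact h
  intro hi
  apply hn
  have hm := ((intervalIntegrable_iff_integrableOn_Ioc_of_le ht.le).1 hi).aestronglyMeasurable
  have hKm : Measurable (fun s => (fractionalKernel α (t - s) * β)⁻¹) := by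
    unfold fractionalKernel; fun_prop
  have := hKm.aestronglyMeasurable.mul hm
  rw [← restrict_Ioo_eq_restrict_Ioc] at this ⊢
  refine this.congr ?_
  filter_upwards [ae_restrict_mem measurableSet_Ioo] with s hs
  have hK : fractionalKernel α (t - s) ≠ 0 := by
    unfold fractionalKernel
    exact (div_pos (Real.rpow_pos_of_pos (by linarith [hs.2]) _) (Real.Gamma_pos_of_pos hα)).ne'
  simp only [Pi.mul_apply]
  have := hβ.ne
  field_simp

lemma auxE_meas {α β : ℝ} (hα : 0 < α) (hβ : β < 0) {E : ℝ → ℝ}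
    (hE : SolvesResolventEq (fractionalKernel α) β E) :
    AEStronglyMeasurable E (volume.restrict (Ioi 0)) := by
  let G : Set ℝ := {t | AEStronglyMeasurable E (volume.restrict (Ioc 0 t))}
  let A : Set ℝ := ⋃ q : {q : ℚ // (q : ℝ) ∈ G}, Ioc (0:ℝ) (q : ℚ)
  have hA : MeasurableSet A := MeasurableSet.iUnion fun q => measurableSet_Ioc
  have hEA : AEStronglyMeasurable E (volume.restrict A) :=
    aestronglyMeasurable_iUnion_iff.2 fun q => q.2
  have hsub : {t | t ∈ Ioi (0:ℝ) \ A ∧ t ∈ G}.Subsingleton := by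
    have key : ∀ t u : ℝ, t ∈ Ioi (0:ℝ) \ A → u ∈ G → ¬ t < u := by
      intro t u ht hu htu
      obtain ⟨q, hq1, hq2⟩ := exists_rat_btwn htu
      apply ht.2
      have hqG : (q : ℝ) ∈ G :=
        AEStronglyMeasurable.mono_set (Ioc_subset_Ioc_right hq2.le) hu
      exact mem_iUnion.2 ⟨⟨q, hqG⟩, ht.1, hq1.le⟩
    intro t ht u hu
    exact le_antisymm (not_lt.1 (key u t hu.1 ht.2)) (not_lt.1 (key t u ht.1 hu.2))
  have hEB : AEStronglyMeasurable E (volume.restrict (Ioi 0 \ A)) := by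
    have hKm : Measurable (fractionalKernel α) := by
      unfold fractionalKernel; fun_prop
    refine hKm.aestronglyMeasurable.congr ?_
    have h0 : ∀ᵐ t ∂(volume.restrict (Ioi 0 \ A)), t ∉ {t | t ∈ Ioi (0:ℝ) \ A ∧ t ∈ G} :=
      ae_restrict_of_ae (measure_eq_zero_iff_ae_notMem.1 (hsub.measure_zero volume))
    filter_upwards [ae_restrict_mem (measurableSet_Ioi.diff hA), h0] with t ht h1
    exact (auxE_eq_of_not hα hβ hE ht.1 (fun h => h1 ⟨ht, h⟩)).symm
  have : AEStronglyMeasurable E (volume.restrict (A ∪ (Ioi 0 \ A))) :=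
    aestronglyMeasurable_union_iff.2 ⟨hEA, hEB⟩
  exact this.mono_set (by intro x hx; by_cases h : x ∈ A; exacts [Or.inl h, Or.inr ⟨hx, h⟩])

def auxf (E : ℝ → ℝ) (l : ℝ) (S : Set ℝ) : ℝ → ℝ := S.indicator (fun s => Real.exp (-l * s) * E s)

lemma auxf_conv {α l : ℝ} {E : ℝ → ℝ} {S : Set ℝ} {t : ℝ} (ht : 0 < t) (h1 : Ioc 0 t ⊆ S)
    (h2 : S ⊆ Ioi 0) : auxConv (auxf E l S) (auxK α l) t =
      Real.exp (-l * t) * ∫ s in (0:ℝ)..t, fractionalKernel α (t - s) * E s := by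
  rw [intervalIntegral.integral_of_le ht.le, integral_Ioc_eq_integral_Ioo, ← integral_const_mul,
    ← integral_indicator measurableSet_Ioo]
  unfold auxConv
  congr 1; ext s
  by_cases hs : s ∈ Ioo 0 t
  · rw [indicator_of_mem hs, auxf, indicator_of_mem (h1 ⟨hs.1, hs.2.le⟩), auxK,
      indicator_of_mem (show t - s ∈ Ioi (0:ℝ) from sub_pos.2 hs.2)]
    have : Real.exp (-l * t) = Real.exp (-l * s) * Real.exp (-l * (t - s)) := by
      rw [← Real.exp_add]; congr 1; ring
    rw [this]; ring
  · rw [indicator_of_notMem hs]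
    by_cases hsS : s ∈ S
    · have : t - s ∉ Ioi (0:ℝ) := fun h => hs ⟨h2 hsS, sub_pos.1 h⟩
      rw [auxK, indicator_of_notMem this, mul_zero]
    · rw [auxf, indicator_of_notMem hsS, zero_mul]

lemma auxf_conv_neg {α l : ℝ} {E : ℝ → ℝ} {S : Set ℝ} {t : ℝ} (ht : t ≤ 0)
    (h2 : S ⊆ Ioi 0) : auxConv (auxf E l S) (auxK α l) t = 0 := by
  unfold auxConv
  apply integral_eq_zero_of_ae
  refine Eventually.of_forall fun s => ?_
  by_cases hsS : s ∈ S
  · have h3 : 0 < s := h2 hsS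
    have : t - s ∉ Ioi (0:ℝ) := fun h => by
      have : 0 < t - s := h
      linarith
    simp [auxK, indicator_of_notMem this]
  · simp [auxf, indicator_of_notMem hsS]

lemma auxf_eq {α β l : ℝ} {E : ℝ → ℝ} (hE : SolvesResolventEq (fractionalKernel α) β E)
    {S : Set ℝ} {t : ℝ} (ht : 0 < t) (h1 : Ioc 0 t ⊆ S) (h2 : S ⊆ Ioi 0) :
    auxf E l S t + (-β) * auxConv (auxf E l S) (auxK α l) t = auxK α l t := by
  rw [auxf_conv ht h1 h2, auxf, indicator_of_mem (h1 ⟨ht, le_rfl⟩), auxK,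
    indicator_of_mem (show t ∈ Ioi (0:ℝ) from ht)]
  have h := hE.2 t ht
  have e : ∫ s in (0:ℝ)..t, fractionalKernel α (t - s) * (β * E s) =
      β * ∫ s in (0:ℝ)..t, fractionalKernel α (t - s) * E s := by
    rw [← intervalIntegral.integral_const_mul]
    congr 1; ext s; ring
  rw [e] at h
  linear_combination Real.exp (-l * t) * h

lemma auxf_sq (E : ℝ → ℝ) (l : ℝ) (S : Set ℝ) : (fun t => auxf E l S t ^ 2) =
    S.indicator (fun s => Real.exp (-(2 * l) * s) * E s ^ 2) := by
  ext t
  by_cases h : t ∈ S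
  · simp only [auxf, indicator_of_mem h]
    rw [mul_pow, ← Real.exp_nat_mul]; congr 2; push_cast; ring
  · simp [auxf, indicator_of_notMem h]

lemma auxf_meas {α β : ℝ} (hα : 0 < α) (hβ : β < 0) {E : ℝ → ℝ}
    (hE : SolvesResolventEq (fractionalKernel α) β E) (l : ℝ) {S : Set ℝ} (hS : MeasurableSet S)
    (h2 : S ⊆ Ioi 0) : AEStronglyMeasurable (auxf E l S) := by
  unfold auxf
  rw [aestronglyMeasurable_indicator_iff hS]
  have : Measurable (fun s : ℝ => Real.exp (-l * s)) := by fun_prop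
  exact this.aestronglyMeasurable.mul ((auxE_meas hα hβ hE).mono_set h2)

lemma auxK_re {α l : ℝ} (hα : α ∈ Ioo (1/2 : ℝ) 1) (hl : 0 < l) (y : ℝ) :
    0 ≤ (𝓕 (fun t => (auxK α l t : ℂ)) y).re := by
  have h0 : 0 < α := by linarith [hα.1]
  rw [auxK_fourier h0 hl]
  set z : ℂ := (l : ℂ) + (2 * π * y : ℝ) * Complex.I with hz
  have hzre : 0 < z.re := by simp [hz, hl]
  have hz0 : z ≠ 0 := fun h => by simp [h] at hzre
  have harg := Complex.abs_arg_lt_pi_div_two_iff.2 (Or.inl hzre)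
  rw [Complex.cpow_def_of_ne_zero hz0, Complex.exp_re]
  refine mul_nonneg (Real.exp_pos _).le (Real.cos_nonneg_of_mem_Icc ?_)
  have him : (Complex.log z * (-(α : ℂ))).im = -(z.arg * α) := by
    simp [Complex.mul_im, Complex.log_im]
  rw [him]
  rw [abs_lt] at harg
  constructor <;> nlinarith [hα.1, hα.2, harg.1, harg.2, Real.pi_pos]

lemma auxf_bound {α β l : ℝ} (hα : α ∈ Ioo (1/2 : ℝ) 1) (hβ : β < 0) (hl : 0 < l) {E : ℝ → ℝ}
    (hE : SolvesResolventEq (fractionalKernel α) β E) {T : ℝ} (hT : 0 < T) :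
    Integrable (fun t => auxf E l (Ioc 0 T) t ^ 2) ∧
    ∫ t, auxf E l (Ioc 0 T) t ^ 2 ≤ ∫ t, auxK α l t ^ 2 := by
  have h0 : 0 < α := by linarith [hα.1]
  set f := auxf E l (Ioc 0 T) with hfdef
  have hsubT : Ioc 0 T ⊆ Ioi (0:ℝ) := fun x hx => hx.1
  have hm : AEStronglyMeasurable f := auxf_meas h0 hβ hE l measurableSet_Ioc hsubT
  have hE2 : IntegrableOn (fun t => E t ^ 2) (Ioc 0 T) :=
    (intervalIntegrable_iff_integrableOn_Ioc_of_le hT.le).1 (hE.1 T hT)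
  have hf2 : Integrable (fun t => f t ^ 2) := by
    refine Integrable.mono' ((integrable_indicator_iff measurableSet_Ioc).2 hE2) (hm.pow 2)
      (Eventually.of_forall fun t => ?_)
    have := congrFun (auxf_sq E l (Ioc 0 T)) t
    simp only [hfdef] at this ⊢
    rw [this]
    by_cases ht : t ∈ Ioc 0 T
    · rw [indicator_of_mem ht, indicator_of_mem ht, Real.norm_eq_abs,
        abs_of_nonneg (by positivity)]
      have : Real.exp (-(2 * l) * t) ≤ 1 := Real.exp_le_one_iff.2 (by nlinarith [ht.1])
      nlinarith [sq_nonneg (E t)]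
    · simp [indicator_of_notMem ht]
  have hf : Integrable f := by
    have h1 : Integrable ((Ioc 0 T).indicator (fun _ : ℝ => (1:ℝ))) :=
      (integrable_indicator_iff measurableSet_Ioc).2 (by simp)
    refine Integrable.mono' (h1.add hf2) hm (Eventually.of_forall fun t => ?_)
    simp only [Pi.add_apply]
    by_cases ht : t ∈ Ioc 0 T
    · rw [indicator_of_mem ht, Real.norm_eq_abs, abs_le]
      constructor <;> nlinarith [sq_nonneg (f t - 1), sq_nonneg (f t + 1)]
    · simp [hfdef, auxf, indicator_of_notMem ht]
  refine ⟨hf2, ?_⟩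
  have hK := auxK_int h0 hl
  have hK2 := auxK_sq hα.1 hl
  have hpos := aux_pos hf hK hf2 hK2 (auxK_re hα hl)
  have hfK := aux_mul_int hf hK hf2 hK2
  have e : (fun t => f t * auxConv f (auxK α l) t) =
      fun t => (-β)⁻¹ * (f t * auxK α l t - f t ^ 2) := by
    ext t
    by_cases ht : t ∈ Ioc 0 T
    · have := auxf_eq (l := l) hE ht.1 (Ioc_subset_Ioc_right ht.2) hsubT
      rw [← hfdef] at this
      rw [← this]
      have := hβ.ne
      field_simp
      ring
    · have : f t = 0 := by simp [hfdef, auxf, indicator_of_notMem ht]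
      simp [this]
  rw [e, integral_const_mul, integral_sub hfK hf2] at hpos
  have hb : 0 < (-β)⁻¹ := inv_pos.2 (by linarith)
  have h3 : 0 ≤ (∫ t, f t * auxK α l t) - ∫ t, f t ^ 2 := nonneg_of_mul_nonneg_right hpos hb
  have h4 : ∫ t, f t * auxK α l t ≤ ∫ t, (f t ^ 2 + auxK α l t ^ 2) / 2 := by
    refine integral_mono hfK ((hf2.add hK2).div_const 2) fun t => ?_
    simp only
    nlinarith [sq_nonneg (f t - auxK α l t)]
  rw [integral_div, integral_add hf2 hK2] at h4
  linarith

lemma auxf_full_sq {α β l : ℝ} (hα : α ∈ Ioo (1/2 : ℝ) 1) (hβ : β < 0) (hl : 0 < l) {E : ℝ → ℝ}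
    (hE : SolvesResolventEq (fractionalKernel α) β E) :
    Integrable (fun t => auxf E l (Ioi 0) t ^ 2) := by
  rw [auxf_sq, integrable_indicator_iff measurableSet_Ioi]
  have hT : ∀ T : ℝ, 0 < T → IntegrableOn (fun s => Real.exp (-(2 * l) * s) * E s ^ 2) (Ioc 0 T) := by
    intro T hT
    have := (auxf_bound hα hβ hl hE hT).1
    rwa [auxf_sq, integrable_indicator_iff measurableSet_Ioc] at this
  refine integrableOn_Ioi_of_intervalIntegral_norm_bounded (ι := ℕ) (l := atTop)
    (b := fun n : ℕ => (n : ℝ) + 1) (∫ t, auxK α l t ^ 2) 0 (fun n => hT _ (by positivity)) ?_ ?_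
  · exact tendsto_atTop_add_const_right _ _ tendsto_natCast_atTop_atTop
  · refine Eventually.of_forall fun n => ?_
    have hn : (0:ℝ) < n + 1 := by positivity
    have := (auxf_bound hα hβ hl hE hn).2
    rw [auxf_sq, integral_indicator measurableSet_Ioc] at this
    rw [intervalIntegral.integral_of_le hn.le]
    refine le_trans (le_of_eq ?_) this
    congr 1; ext s
    rw [Real.norm_eq_abs, abs_of_nonneg (by positivity)]

lemma auxf_full_int {α β l : ℝ} (hα : α ∈ Ioo (1/2 : ℝ) 1) (hβ : β < 0) (hl : 0 < l) {E : ℝ → ℝ}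
    (hE : SolvesResolventEq (fractionalKernel α) β E) :
    Integrable (auxf E l (Ioi 0)) := by
  have h0 : 0 < α := by linarith [hα.1]
  have h1 := auxf_full_sq hα hβ (half_pos hl) hE
  have h2 : Integrable ((Ioi (0:ℝ)).indicator (fun t => Real.exp (-l * t))) :=
    (integrable_indicator_iff measurableSet_Ioi).2 (integrableOn_exp_mul_Ioi (by linarith) 0)
  refine Integrable.mono' (h2.add h1) (auxf_meas h0 hβ hE l measurableSet_Ioi subset_rfl)
    (Eventually.of_forall fun t => ?_)
  have := congrFun (auxf_sq E (l / 2) (Ioi 0)) t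
  simp only [Pi.add_apply]
  rw [this]
  by_cases ht : t ∈ Ioi (0:ℝ)
  · simp only [auxf, indicator_of_mem ht, Real.norm_eq_abs]
    have e : -(2 * (l / 2)) * t = -l * t := by ring
    rw [e, abs_mul, abs_of_pos (Real.exp_pos _)]
    have := Real.exp_pos (-l * t)
    have h3 : |E t| ≤ 1 + E t ^ 2 := by
      rw [abs_le]; constructor <;> nlinarith [sq_nonneg (E t - 1), sq_nonneg (E t + 1)]
    nlinarith
  · simp [auxf, indicator_of_notMem ht]

lemma auxf_plancherel {α β l : ℝ} (hα : α ∈ Ioo (1/2 : ℝ) 1) (hβ : β < 0) (hl : 0 < l)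
    {E : ℝ → ℝ} (hE : SolvesResolventEq (fractionalKernel α) β E) :
    ∫ t in Ioi (0:ℝ), Real.exp (-(2 * l) * t) * E t ^ 2 =
      ∫ y : ℝ, (‖((l : ℂ) + (2 * π * y : ℝ) * Complex.I) ^ (α : ℂ) + (-β : ℝ)‖ ^ 2)⁻¹ := by
  have h0 : 0 < α := by linarith [hα.1]
  have hf := auxf_full_int hα hβ hl hE
  have hf2 := auxf_full_sq hα hβ hl hE
  have hK := auxK_int h0 hl
  have hP := (aux_plancherel_real hf hf2).2
  rw [auxf_sq, integral_indicator measurableSet_Ioi] at hP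
  rw [← hP]
  congr 1; ext y
  have hc := auxConv_int hf hK
  have e1 : (fun t => ((auxf E l (Ioi 0) t + (-β) * auxConv (auxf E l (Ioi 0)) (auxK α l) t : ℝ) : ℂ))
      = fun t => (auxK α l t : ℂ) := by
    ext t
    rcases lt_or_ge 0 t with ht | ht
    · rw [auxf_eq (S := Ioi 0) hE ht (fun x hx => hx.1) subset_rfl]
    · rw [auxf_conv_neg ht subset_rfl]
      have : t ∉ Ioi (0:ℝ) := not_lt.2 ht
      simp [auxf, auxK, indicator_of_notMem this]
  have e2 := aux_fadd hf hc (-β) y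
  have hre := auxK_re hα hl y
  rw [e1, auxConv_fourier hf hK] at e2
  rw [auxK_fourier h0 hl] at e2 hre
  set z : ℂ := (l : ℂ) + (2 * π * y : ℝ) * Complex.I with hz
  have hzre : 0 < z.re := by simp [hz, hl]
  have hz0 : z ≠ 0 := fun h => by simp [h] at hzre
  have hza : z ^ (α : ℂ) ≠ 0 := by simp [Complex.cpow_eq_zero_iff, hz0]
  set F := 𝓕 (fun x => (auxf E l (Ioi 0) x : ℂ)) y
  have e3 : F * (z ^ (α : ℂ) + (-β : ℝ)) = 1 := by
    rw [Complex.cpow_neg] at e2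
    field_simp at e2
    linear_combination -e2
  have e4 : F = (z ^ (α : ℂ) + (-β : ℝ))⁻¹ := eq_inv_of_mul_eq_one_left e3
  rw [e4, norm_inv, inv_pow]

end solution

section limit

lemma aux_norm_sq (α b : ℝ) (z : ℂ) (hz : z ≠ 0) :
    ‖z ^ (α : ℂ) + (b : ℝ)‖ ^ 2 =
      ‖z‖ ^ (2 * α) + 2 * b * ‖z‖ ^ α * Real.cos (z.arg * α) + b ^ 2 := by
  rw [Complex.sq_norm, Complex.normSq_apply]
  simp only [Complex.add_re, Complex.add_im, Complex.ofReal_re, Complex.ofReal_im,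
    Complex.cpow_ofReal_re, Complex.cpow_ofReal_im]
  have e : ‖z‖ ^ (2 * α) = (‖z‖ ^ α) ^ 2 := by
    rw [mul_comm, Real.rpow_mul (norm_nonneg _)]; norm_num
  rw [e]
  linear_combination (‖z‖ ^ α) ^ 2 * Real.sin_sq_add_cos_sq (z.arg * α)

lemma aux_dom_int {α : ℝ} (hα : α ∈ Ioo (1/2 : ℝ) 1) :
    Integrable (fun u : ℝ => (1 + |u| ^ (2 * α))⁻¹) := by
  have h := (integrable_one_add_norm (E := ℝ) (μ := volume) (r := 2 * α)
    (by simp; linarith [hα.1])).const_mul 4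
  refine Integrable.mono' h ?_ (Eventually.of_forall fun u => ?_)
  · exact (by fun_prop : Measurable (fun u : ℝ => (1 + |u| ^ (2 * α))⁻¹)).aestronglyMeasurable
  have hp : 0 ≤ |u| ^ (2 * α) := Real.rpow_nonneg (abs_nonneg _) _
  have ha := abs_nonneg u
  have h1 : (0:ℝ) < (1 + |u|) ^ (2 * α) := Real.rpow_pos_of_pos (by linarith) _
  rw [Real.norm_eq_abs, Real.norm_eq_abs, abs_of_nonneg (by positivity), Real.rpow_neg (by positivity),
    ← div_eq_mul_inv, inv_eq_one_div, div_le_div_iff₀ (by positivity) h1, one_mul]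
  have h2 : (2:ℝ) ^ (2 * α) ≤ 4 := by
    have : (2:ℝ) ^ (2 * α) ≤ 2 ^ (2:ℝ) :=
      Real.rpow_le_rpow_of_exponent_le (by norm_num) (by linarith [hα.2])
    norm_num at this ⊢; exact this
  have h2a : 0 ≤ 2 * α := by linarith [hα.1]
  rcases le_total |u| 1 with hu | hu
  · have : (1 + |u|) ^ (2 * α) ≤ 2 ^ (2 * α) := Real.rpow_le_rpow (by linarith) (by linarith) h2a
    linarith
  · have : (1 + |u|) ^ (2 * α) ≤ (2 * |u|) ^ (2 * α) :=
      Real.rpow_le_rpow (by linarith) (by linarith) h2a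
    rw [Real.mul_rpow (by norm_num) ha] at this
    nlinarith

lemma aux_scale {α b : ℝ} (hα : 0 < α) (hb : 0 < b) (y : ℝ) :
    |2 * π * y| ^ α = b * |2 * π * b ^ (-(1 / α)) * y| ^ α := by
  have h1 : |2 * π * b ^ (-(1 / α)) * y| = b ^ (-(1 / α)) * |2 * π * y| := by
    rw [show 2 * π * b ^ (-(1 / α)) * y = b ^ (-(1 / α)) * (2 * π * y) by ring, abs_mul,
      abs_of_pos (Real.rpow_pos_of_pos hb _)]
  rw [h1, Real.mul_rpow (Real.rpow_pos_of_pos hb _).le (abs_nonneg _), ← Real.rpow_mul hb.le]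
  have : -(1 / α) * α = -1 := by field_simp
  rw [this, Real.rpow_neg_one]
  field_simp

lemma aux_two (α x : ℝ) (hx : 0 ≤ x) : x ^ (2 * α) = (x ^ α) ^ 2 := by
  rw [mul_comm, Real.rpow_mul hx]; norm_num

lemma aux_lim_int {α b : ℝ} (hα : α ∈ Ioo (1/2 : ℝ) 1) (hb : 0 < b) :
    ∫ y : ℝ, (|2 * π * y| ^ (2 * α) + 2 * b * |2 * π * y| ^ α * Real.cos (π * α / 2) + b ^ 2)⁻¹ =
      ((1 / π) * ∫ u in Ioi (0:ℝ), 1 / (1 + 2 * u ^ α * Real.cos (π * α / 2) + u ^ (2 * α))) *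
      b ^ (1 / α - 2) := by
  have h0 : 0 < α := by linarith [hα.1]
  set q : ℝ → ℝ := fun u => 1 / (1 + 2 * u ^ α * Real.cos (π * α / 2) + u ^ (2 * α)) with hq
  set c : ℝ := 2 * π * b ^ (-(1 / α)) with hc
  have hcpos : 0 < c := by have := Real.rpow_pos_of_pos hb (-(1 / α)); positivity
  have e : (fun y : ℝ => (|2 * π * y| ^ (2 * α) + 2 * b * |2 * π * y| ^ α * Real.cos (π * α / 2)
      + b ^ 2)⁻¹) = fun y => (b ^ 2)⁻¹ * (fun x => q (c * x)) |y| := by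
    ext y
    have h1 : |c * y| = c * |y| := by rw [abs_mul, abs_of_pos hcpos]
    rw [aux_two _ _ (abs_nonneg _), aux_scale h0 hb, ← hc, h1]
    simp only [hq]
    rw [aux_two _ _ (by positivity), one_div, ← mul_inv]
    congr 1; ring
  rw [e, integral_const_mul, integral_comp_abs (f := fun x => q (c * x)),
    integral_comp_mul_left_Ioi q 0 hcpos, mul_zero, smul_eq_mul]
  have e2 : b ^ (1 / α - 2) = b ^ (1 / α) * (b ^ 2)⁻¹ := by
    rw [Real.rpow_sub hb]; norm_num [div_eq_mul_inv]
  have e3 : c⁻¹ = (2 * π)⁻¹ * b ^ (1 / α) := by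
    rw [hc, mul_inv, Real.rpow_neg hb.le, inv_inv]
  rw [e2, e3]
  field_simp

lemma aux_dct {α b : ℝ} (hα : α ∈ Ioo (1/2 : ℝ) 1) (hb : 0 < b) :
    Tendsto (fun n : ℕ => ∫ y : ℝ, (‖(((1 / ((n : ℝ) + 1) : ℝ) : ℂ) +
      (2 * π * y : ℝ) * Complex.I) ^ (α : ℂ) + (b : ℝ)‖ ^ 2)⁻¹) atTop
      (𝓝 (∫ y : ℝ, (|2 * π * y| ^ (2 * α) + 2 * b * |2 * π * y| ^ α * Real.cos (π * α / 2)
        + b ^ 2)⁻¹)) := by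
  have h0 : 0 < α := by linarith [hα.1]
  set c : ℝ := 2 * π * b ^ (-(1 / α)) with hc
  have hcpos : 0 < c := by have := Real.rpow_pos_of_pos hb (-(1 / α)); positivity
  refine tendsto_integral_of_dominated_convergence
    (fun y => (b ^ 2)⁻¹ * (1 + |c * y| ^ (2 * α))⁻¹) ?_ ?_ ?_ ?_
  · intro n
    refine Measurable.aestronglyMeasurable ?_
    refine ((Measurable.norm ?_).pow_const 2).inv
    refine Measurable.add_const (Measurable.pow_const ?_ _) _
    fun_prop
  · exact ((aux_dom_int hα).comp_mul_left' hcpos.ne').const_mul _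
  · intro n
    refine Eventually.of_forall fun y => ?_
    set z : ℂ := ((1 / ((n : ℝ) + 1) : ℝ) : ℂ) + (2 * π * y : ℝ) * Complex.I with hz
    have hzre : 0 < z.re := by
      have : z.re = 1 / ((n : ℝ) + 1) := by
        rw [hz, Complex.add_re, Complex.ofReal_re, Complex.re_ofReal_mul]; simp
      rw [this]; positivity
    have hzim : z.im = 2 * π * y := by
      rw [hz, Complex.add_im, Complex.ofReal_im, Complex.im_ofReal_mul]; simp
    have hz0 : z ≠ 0 := fun h => by simp [h] at hzre
    have harg := abs_lt.1 (Complex.abs_arg_lt_pi_div_two_iff.2 (Or.inl hzre))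
    have hcos : 0 ≤ Real.cos (z.arg * α) := by
      apply Real.cos_nonneg_of_mem_Icc
      constructor <;> nlinarith [hα.1, hα.2, harg.1, harg.2, Real.pi_pos]
    rw [Real.norm_eq_abs, abs_of_nonneg (by positivity), aux_norm_sq α b z hz0, ← mul_inv]
    have h1 : |2 * π * y| ^ (2 * α) ≤ ‖z‖ ^ (2 * α) := by
      rw [← hzim]
      exact Real.rpow_le_rpow (abs_nonneg _) (Complex.abs_im_le_norm z) (by linarith)
    have h2 : |2 * π * y| ^ (2 * α) = b ^ 2 * |c * y| ^ (2 * α) := by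
      rw [aux_two _ _ (abs_nonneg _), aux_two _ _ (abs_nonneg _), aux_scale h0 hb, ← hc]; ring
    have h3 : 0 ≤ ‖z‖ ^ α := Real.rpow_nonneg (norm_nonneg _) _
    have h4 : 0 ≤ |c * y| ^ (2 * α) := Real.rpow_nonneg (abs_nonneg _) _
    have h5 : 0 ≤ 2 * b * ‖z‖ ^ α * Real.cos (z.arg * α) := by positivity
    apply inv_anti₀ (by positivity)
    rw [mul_add, mul_one, ← h2]
    linarith
  · have : ∀ᵐ y : ℝ, y ≠ 0 := by simp [ae_iff]
    filter_upwards [this] with y hy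
    have hw : (2 * π * y : ℝ) ≠ 0 := by positivity
    set w : ℝ := 2 * π * y
    set z0 : ℂ := (w : ℂ) * Complex.I with hz0
    have hz0ne : z0 ≠ 0 := by simp [hz0, hw]
    have hz0s : z0 ∈ Complex.slitPlane := Or.inr (by simpa [hz0] using hw)
    have hnorm : ‖z0‖ = |w| := by simp [hz0]
    have hcos : Real.cos (z0.arg * α) = Real.cos (π * α / 2) := by
      rcases lt_or_gt_of_ne hw with h | h
      · have : z0.arg = -(π / 2) := Complex.arg_eq_neg_pi_div_two_iff.2 (by simp [hz0, h])
        rw [this, ← Real.cos_neg]; congr 1; ring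
      · have : z0.arg = π / 2 := Complex.arg_eq_pi_div_two_iff.2 (by simp [hz0, h])
        rw [this]; congr 1; ring
    have hlim := aux_norm_sq α b z0 hz0ne
    rw [hnorm, hcos] at hlim
    rw [← hlim]
    have hseq : Tendsto (fun n : ℕ => ((1 / ((n : ℝ) + 1) : ℝ) : ℂ) + (w : ℂ) * Complex.I) atTop
        (𝓝 z0) := by
      have h1 : Tendsto (fun n : ℕ => ((1 / ((n : ℝ) + 1) : ℝ) : ℂ)) atTop (𝓝 ((0:ℝ) : ℂ)) :=
        (Complex.continuous_ofReal.tendsto 0).comp tendsto_one_div_add_atTop_nhds_zero_nat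
      have := h1.add_const ((w : ℂ) * Complex.I)
      simpa [hz0] using this
    have hcp : Tendsto (fun n : ℕ => (((1 / ((n : ℝ) + 1) : ℝ) : ℂ) + (w : ℂ) * Complex.I) ^ (α : ℂ))
        atTop (𝓝 (z0 ^ (α : ℂ))) := (continuousAt_cpow_const hz0s).tendsto.comp hseq
    refine Tendsto.inv₀ (((hcp.add_const _).norm).pow 2) ?_
    rw [hlim]
    have hc2 : 0 ≤ Real.cos (π * α / 2) := by
      apply Real.cos_nonneg_of_mem_Icc
      constructor <;> nlinarith [hα.1, hα.2, Real.pi_pos]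
    have h3 : 0 ≤ |w| ^ α := Real.rpow_nonneg (abs_nonneg _) _
    have h4 : 0 ≤ |w| ^ (2 * α) := Real.rpow_nonneg (abs_nonneg _) _
    positivity

end limit


/-- For the fractional kernel `K_α` with `α ∈ (1/2,1)` and `β < 0`,
`∫₀^∞ E_β(t)² dt = C_α |β|^{1/α - 2}` with
`C_α = (1/π)∫₀^∞ du/(1 + 2u^α cos(πα/2) + u^{2α})`. -/
theorem fractional_Ebeta_L2_norm
    (α β : ℝ) (hα : α ∈ Set.Ioo (1/2 : ℝ) 1) (hβ : β < 0)
    (E : ℝ → ℝ)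
    (hE : SolvesResolventEq (fractionalKernel α) β E) :
    (∫ t in Set.Ioi (0:ℝ), (E t) ^ 2) =
      ((1 / π) * ∫ u in Set.Ioi (0:ℝ),
        1 / (1 + 2 * u ^ α * Real.cos (π * α / 2) + u ^ (2 * α))) *
      |β| ^ (1 / α - 2) := by
  have h0 : 0 < α := by linarith [hα.1]
  have hb : 0 < -β := by linarith
  rw [abs_of_neg hβ, ← aux_lim_int hα hb]
  have hm := auxE_meas h0 hβ hE
  set R := ∫ y : ℝ, (|2 * π * y| ^ (2 * α) + 2 * (-β) * |2 * π * y| ^ α * Real.cos (π * α / 2)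
        + (-β) ^ 2)⁻¹ with hR
  let l : ℕ → ℝ := fun n => 1 / ((n : ℝ) + 1)
  have hl : ∀ n, 0 < l n := fun n => by simp only [l]; positivity
  have hlim : Tendsto (fun n => ∫ t in Ioi (0:ℝ), Real.exp (-(2 * l n) * t) * E t ^ 2) atTop (𝓝 R) := by
    refine (aux_dct hα hb).congr fun n => ?_
    exact (auxf_plancherel hα hβ (hl n) hE).symm
  have hR0 : 0 ≤ R := ge_of_tendsto' hlim fun n => integral_nonneg fun t => by positivity
  have hmeas : ∀ n, AEStronglyMeasurable (fun t => Real.exp (-(2 * l n) * t) * E t ^ 2)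
      (volume.restrict (Ioi 0)) := fun n =>
    (by fun_prop : Measurable (fun t : ℝ => Real.exp (-(2 * l n) * t))).aestronglyMeasurable.mul
      (hm.pow 2)
  have hint : ∀ n, IntegrableOn (fun t => Real.exp (-(2 * l n) * t) * E t ^ 2) (Ioi 0) := by
    intro n
    have := auxf_full_sq hα hβ (hl n) hE
    rwa [auxf_sq, integrable_indicator_iff measurableSet_Ioi] at this
  have hmono : Tendsto (fun n => ∫⁻ t in Ioi (0:ℝ), ENNReal.ofReal (Real.exp (-(2 * l n) * t) * E t ^ 2))
      atTop (𝓝 (∫⁻ t in Ioi (0:ℝ), ENNReal.ofReal (E t ^ 2))) := by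
    refine lintegral_tendsto_of_tendsto_of_monotone (fun n => (hmeas n).aemeasurable.ennreal_ofReal) ?_ ?_
    · filter_upwards [ae_restrict_mem measurableSet_Ioi] with t ht n m hnm
      apply ENNReal.ofReal_le_ofReal
      refine mul_le_mul_of_nonneg_right (Real.exp_le_exp.2 ?_) (sq_nonneg _)
      have : l m ≤ l n := one_div_le_one_div_of_le (by positivity)
        (by have : (n : ℝ) ≤ m := by exact_mod_cast hnm
            linarith)
      have ht' : 0 < t := ht
      nlinarith
    · refine Eventually.of_forall fun t => ?_
      refine (ENNReal.continuous_ofReal.tendsto _).comp ?_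
      have h1 : Tendsto l atTop (𝓝 0) := tendsto_one_div_add_atTop_nhds_zero_nat
      have h2 : Continuous (fun x : ℝ => Real.exp (-(2 * x) * t) * E t ^ 2) := by fun_prop
      have := (h2.tendsto 0).comp h1
      simpa [Function.comp_def] using this
  have hlim2 : Tendsto (fun n => ∫⁻ t in Ioi (0:ℝ), ENNReal.ofReal (Real.exp (-(2 * l n) * t) * E t ^ 2))
      atTop (𝓝 (ENNReal.ofReal R)) := by
    refine ((ENNReal.continuous_ofReal.tendsto R).comp hlim).congr fun n => ?_
    exact ofReal_integral_eq_lintegral_ofReal (hint n) (Eventually.of_forall fun t => by positivity)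
  rw [integral_eq_lintegral_of_nonneg_ae (Eventually.of_forall fun t => sq_nonneg _) (hm.pow 2),
    tendsto_nhds_unique hmono hlim2, ENNReal.toReal_ofReal hR0]

end
end
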